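/- Let M be a polynomial of degree at most 2 whose cell averages satisfy (1/h)∫_{I₋₁} M = a, (1/h)∫_{I₀} M = b and (1/h)∫_{I₁} M = c. Then M(−h/(2√3)) = (√3/12)·a + b − (√3/12)·c and M(h/(2√3)) = −(√3/12)·a + b + (√3/12)·c. -/

import Mathlib

open Polynomial

/-!
A quadratic is determined by its value, central difference and second difference at the centre of
a cell. Averaging it over a cell of width `h` adds to its value at the midpoint the same
constant for every cell, a twenty-fourth of its second difference. Hence, if `a`, `b`, `c` are
the averages over the cells centred at `x - h`, `x`, `x + h`, then

  `M (x + t h) = b + (t / 2) (c - a) + (t² / 2 - 1 / 24) (a - 2 b + c)`,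

and the Gauss–Legendre nodes `t² = 1 / 12` are exactly those at which the last term drops out.
-/

/-- The average of `f` over the cell of width `h` centred at `x`: the data from which a
finite-volume scheme reconstructs `f`. For `h = 0` it is `0`, not `f x`. -/
noncomputable def cellAverage (h : ℝ) (f : ℝ → ℝ) (x : ℝ) : ℝ :=
  ⨍ y in (x - h / 2)..(x + h / 2), f y

theorem one_div_mul_integral_eq_cellAverage {h x u v : ℝ} (f : ℝ → ℝ)
    (hu : u = x - h / 2) (hv : v = x + h / 2) :
    (1 / h) * ∫ y in u..v, f y = cellAverage h f x := by
  rw [cellAverage, interval_average_eq_div, hu, hv, add_sub_sub_cancel, add_halves,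
    one_div_mul_eq_div]

theorem eval_eq_quadratic_of_degree_le_two {R : Type*} [Semiring R] {M : R[X]}
    (hdeg : M.degree ≤ 2) (x : R) :
    M.eval x = M.coeff 2 * x ^ 2 + M.coeff 1 * x + M.coeff 0 := by
  conv_lhs => rw [eq_quadratic_of_degree_le_two hdeg]
  simp only [eval_add, eval_mul_X_pow, eval_mul_X, eval_C]

theorem second_difference_of_degree_le_two {R : Type*} [CommRing R] {M : R[X]}
    (hdeg : M.degree ≤ 2) (x h : R) :
    M.eval (x - h) - 2 * M.eval x + M.eval (x + h) = 2 * M.coeff 2 * h ^ 2 := by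
  simp only [eval_eq_quadratic_of_degree_le_two hdeg]
  ring

theorem eval_add_mul_of_degree_le_two {K : Type*} [Field K] [NeZero (2 : K)] {M : K[X]}
    (hdeg : M.degree ≤ 2) (x t h : K) :
    M.eval (x + t * h) = M.eval x + t / 2 * (M.eval (x + h) - M.eval (x - h)) +
      t ^ 2 / 2 * (M.eval (x - h) - 2 * M.eval x + M.eval (x + h)) := by
  simp only [eval_eq_quadratic_of_degree_le_two hdeg]
  field_simp
  ring

theorem integral_quadratic (p q r u v : ℝ) :
    ∫ y in u..v, (p * y ^ 2 + q * y + r) =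
      p * ((v ^ 3 - u ^ 3) / 3) + q * ((v ^ 2 - u ^ 2) / 2) + r * (v - u) := by
  have hp : IntervalIntegrable (fun y ↦ p * y ^ 2) MeasureTheory.volume u v :=
    Continuous.intervalIntegrable (by fun_prop) u v
  have hq : IntervalIntegrable (fun y ↦ q * y) MeasureTheory.volume u v :=
    Continuous.intervalIntegrable (by fun_prop) u v
  rw [intervalIntegral.integral_add (hp.add hq) intervalIntegrable_const,
    intervalIntegral.integral_add hp hq, intervalIntegral.integral_const_mul,
    intervalIntegral.integral_const_mul, integral_pow, integral_id,
    intervalIntegral.integral_const, smul_eq_mul]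
  norm_num [mul_comm]

theorem cellAverage_eval_of_degree_le_two {h : ℝ} (hh : h ≠ 0) {M : ℝ[X]}
    (hdeg : M.degree ≤ 2) (x : ℝ) :
    cellAverage h M.eval x = M.eval x + M.coeff 2 * h ^ 2 / 12 := by
  simp only [cellAverage, interval_average_eq_div, eval_eq_quadratic_of_degree_le_two hdeg,
    integral_quadratic, add_sub_sub_cancel, add_halves]
  field_simp
  ring

theorem eval_add_mul_eq_cellAverage {h : ℝ} (hh : h ≠ 0) {M : ℝ[X]}
    (hdeg : M.degree ≤ 2) (x t : ℝ) :
    M.eval (x + t * h) = cellAverage h M.eval x +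
      t / 2 * (cellAverage h M.eval (x + h) - cellAverage h M.eval (x - h)) +
      (t ^ 2 / 2 - 1 / 24) * (cellAverage h M.eval (x - h) - 2 * cellAverage h M.eval x +
        cellAverage h M.eval (x + h)) := by
  simp only [cellAverage_eval_of_degree_le_two hh hdeg]
  linear_combination eval_add_mul_of_degree_le_two hdeg x t h +
    second_difference_of_degree_le_two hdeg x h / 24

theorem eval_gaussPoint_eq_cellAverage {h : ℝ} (hh : h ≠ 0) {M : ℝ[X]}
    (hdeg : M.degree ≤ 2) (x : ℝ) {t : ℝ} (ht : t ^ 2 = 1 / 12) :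
    M.eval (x + t * h) = cellAverage h M.eval x +
      t / 2 * (cellAverage h M.eval (x + h) - cellAverage h M.eval (x - h)) := by
  rw [eval_add_mul_eq_cellAverage hh hdeg, ht]
  ring

/-- On uniform cells `I₋₁ = [−3h/2, −h/2]`, `I₀ = [−h/2, h/2]`, `I₁ = [h/2, 3h/2]` of
width `h > 0`, a polynomial `M` of degree at most 2 with cell averages `a`, `b`, `c` on
`I₋₁`, `I₀`, `I₁` takes the values `(√3/12)a + b − (√3/12)c` and `−(√3/12)a + b + (√3/12)c`
at the two Gauss–Legendre quadrature points `∓h/(2√3)` of `I₀`. -/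
theorem weno_M_gauss_values (h : ℝ) (hh : 0 < h) (M : Polynomial ℝ)
    (hdeg : M.degree ≤ 2) (a b c : ℝ)
    (ha : (1 / h) * ∫ x in (-(3 * h / 2))..(-(h / 2)), M.eval x = a)
    (hb : (1 / h) * ∫ x in (-(h / 2))..(h / 2), M.eval x = b)
    (hc : (1 / h) * ∫ x in (h / 2)..(3 * h / 2), M.eval x = c) :
    M.eval (-(h / (2 * Real.sqrt 3))) =
        (Real.sqrt 3 / 12) * a + b - (Real.sqrt 3 / 12) * c ∧
    M.eval (h / (2 * Real.sqrt 3)) =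
        -(Real.sqrt 3 / 12) * a + b + (Real.sqrt 3 / 12) * c := by
  rw [one_div_mul_integral_eq_cellAverage (x := -h) _ (by ring) (by ring)] at ha
  rw [one_div_mul_integral_eq_cellAverage (x := 0) _ (by ring) (by ring)] at hb
  rw [one_div_mul_integral_eq_cellAverage (x := h) _ (by ring) (by ring)] at hc
  have eval_node {t : ℝ} (ht : t ^ 2 = 1 / 12) : M.eval (t * h) = b + t / 2 * (c - a) := by
    simpa only [ha, hb, hc, zero_add, zero_sub] using
      eval_gaussPoint_eq_cellAverage hh.ne' hdeg 0 ht
  have sq_node : (Real.sqrt 3 / 6) ^ 2 = 1 / 12 := by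
    norm_num [div_pow]
  have node_mul : h / (2 * Real.sqrt 3) = Real.sqrt 3 / 6 * h := by
    field_simp
    norm_num
  rw [node_mul, ← neg_mul, eval_node ((neg_sq _).trans sq_node), eval_node sq_node]
  constructor <;> ring
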